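/- Let S be an invertible bounded linear operator on H and λ > max(1, ‖S‖²). Define R = (λI − SS*)^{-1/2} S and T = (R*)⁻¹. Then I + (TT*)⁻¹ = λ(λI − SS*)⁻¹. -/

import Mathlib

/-- The scalar function `f_p(x) = x / (p x + 1 - p)`. -/
noncomputable def fScalar (p x : ℝ) : ℝ := x / (p * x + 1 - p)

/-- `f_p` applied to an operator via the continuous functional calculus. -/
noncomputable def fOp (p : ℝ) {H : Type*} [NormedAddCommGroup H] [InnerProductSpace ℂ H]
    [CompleteSpace H] (A : H →L[ℂ] H) : H →L[ℂ] H :=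
  cfc (fun x : ℝ => x / (p * x + 1 - p)) A

theorem stmt_16 {H : Type*} [NormedAddCommGroup H] [InnerProductSpace ℂ H] [CompleteSpace H]
    (S : H →L[ℂ] H) (hS : IsUnit S) (l : ℝ) (hl1 : 1 < l)
    (hlS : ‖S‖ ^ 2 < l) :
    1 + Ring.inverse
        ((Ring.inverse (ContinuousLinearMap.adjoint
            (Ring.inverse (CFC.sqrt (l • (1 : H →L[ℂ] H) - S * ContinuousLinearMap.adjoint S)) * S))) *
         ContinuousLinearMap.adjoint (Ring.inverse (ContinuousLinearMap.adjoint
            (Ring.inverse (CFC.sqrt (l • (1 : H →L[ℂ] H) - S * ContinuousLinearMap.adjoint S)) * S)))) =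
      l • Ring.inverse (l • (1 : H →L[ℂ] H) - S * ContinuousLinearMap.adjoint S) := by
  rw [← ContinuousLinearMap.star_eq_adjoint, ← ContinuousLinearMap.star_eq_adjoint,
    ← ContinuousLinearMap.star_eq_adjoint]
  set A := l • (1 : H →L[ℂ] H) - S * star S with hA
  have hpos : IsStrictlyPositive A := by
    have h1 : S * star S ≤ algebraMap ℝ (H →L[ℂ] H) (‖S‖ ^ 2) :=
      CStarAlgebra.mul_star_le_algebraMap_norm_sq
    have h2 : algebraMap ℝ (H →L[ℂ] H) (l - ‖S‖ ^ 2) ≤ A := by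
      rw [hA, map_sub, Algebra.algebraMap_eq_smul_one l]
      exact sub_le_sub_left h1 _
    have h3 : IsStrictlyPositive (algebraMap ℝ (H →L[ℂ] H) (l - ‖S‖ ^ 2)) := by
      refine ⟨algebraMap_nonneg _ (by linarith), ?_⟩
      exact (IsUnit.mk0 (l - ‖S‖ ^ 2) (by linarith)).map (algebraMap ℝ (H →L[ℂ] H))
    exact h3.of_le h2
  have hQu : IsUnit (CFC.sqrt A) := hpos.isUnit_cfcSqrt
  have hQQ : CFC.sqrt A * CFC.sqrt A = A := CFC.sqrt_mul_sqrt_self A hpos.nonneg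
  have hQs : star (CFC.sqrt A) = CFC.sqrt A :=
    (IsSelfAdjoint.of_nonneg (CFC.sqrt_nonneg A)).star_eq
  obtain ⟨q, hq⟩ := hQu
  obtain ⟨s, rfl⟩ := hS
  rw [← hq] at hQQ hQs ⊢
  have hqs : star q = q := Units.ext hQs
  have hSS : (s : H →L[ℂ] H) * star (s : H →L[ℂ] H) = l • 1 - (q : H →L[ℂ] H) * q := by
    rw [hQQ, hA]; abel
  clear_value A
  subst hQQ
  simp only [Ring.inverse_unit, ← Units.val_mul, ← Units.coe_star]
  rw [show (((star (q⁻¹ * s))⁻¹ * star (star (q⁻¹ * s))⁻¹)⁻¹ : (H →L[ℂ] H)ˣ)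
      = q⁻¹ * (s * star s) * q⁻¹ by
    simp [star_inv, hqs, mul_assoc]]
  simp only [Units.val_mul, Units.coe_star, hSS, mul_inv_rev]
  simp [mul_sub, sub_mul, mul_assoc]
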